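/- There exists a 2-(24,4,1) packing with 42 blocks whose leave is a vertex-disjoint union of four cycles of length 6, covering all 24 points (leave type 6^4). -/

import Mathlib

/-!
The packing is given explicitly. Label the points so that `6 * i + k` (with `i < 4`, `k < 6`) is
the `k`-th vertex of the `i`-th hexagon. The 42 blocks listed in `blocks` are invariant under the
group of order 6 generated by `(i, k) ↦ (i, k + 2)` and the exchange of hexagons `0 ↔ 1`, `2 ↔ 3`;
they decompose the complement of the four hexagons into copies of `K₄`.

Two finite computations carry the proof: two distinct blocks share at most one point
(`inter_subsingleton`), and a pair of points is covered by no block exactly when it is an edge of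
one of the hexagons (`uncovered_iff`).
-/

/-- A 2-(24,4,1) packing: a collection of 4-element blocks on 24 points such that
every pair of distinct points lies in at most one block. -/
def IsPacking (B : Finset (Finset (Fin 24))) : Prop :=
  (∀ b ∈ B, b.card = 4) ∧
  ∀ p q : Fin 24, p ≠ q → ∀ b₁ ∈ B, ∀ b₂ ∈ B,
    p ∈ b₁ → q ∈ b₁ → p ∈ b₂ → q ∈ b₂ → b₁ = b₂

/-- Adjacency in the leave of a packing: the pair of distinct points is covered by no block. -/
def LeaveAdj (B : Finset (Finset (Fin 24))) (p q : Fin 24) : Prop :=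
  p ≠ q ∧ ∀ b ∈ B, ¬ (p ∈ b ∧ q ∈ b)

/-- The leave of the packing `B` is a vertex-disjoint union of cycles whose lengths are
given by the list `L`, covering all 24 points. -/
def LeaveIsCycleType (B : Finset (Finset (Fin 24))) (L : List ℕ) : Prop :=
  ∃ f : (i : Fin L.length) → ZMod (L.get i) → Fin 24,
    Function.Bijective (fun x : Σ i : Fin L.length, ZMod (L.get i) => f x.1 x.2) ∧
    ∀ p q : Fin 24, LeaveAdj B p q ↔
      ∃ i k, (p = f i k ∧ q = f i (k + 1)) ∨ (q = f i k ∧ p = f i (k + 1))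

/-- The 42 blocks of the packing as lists; the point `6 * i + k` is vertex `k` of hexagon `i`.
Lists keep the finite checks below cheap for the kernel. -/
def blockList : List (List (Fin 24)) :=
  [[0, 2, 9, 19], [0, 3, 11, 14], [0, 4, 7, 23], [0, 6, 15, 21], [0, 8, 18, 20], [0, 10, 12, 16],
    [0, 13, 17, 22], [1, 3, 15, 19], [1, 4, 9, 12], [1, 5, 13, 23], [1, 6, 10, 17], [1, 7, 14, 20],
    [1, 8, 11, 22], [1, 16, 18, 21], [2, 4, 11, 21], [2, 5, 7, 16], [2, 6, 12, 14], [2, 8, 17, 23],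
    [2, 10, 20, 22], [2, 13, 15, 18], [3, 5, 17, 21], [3, 6, 8, 13], [3, 7, 10, 18], [3, 9, 16, 22],
    [3, 12, 20, 23], [4, 6, 18, 22], [4, 8, 14, 16], [4, 10, 13, 19], [4, 15, 17, 20],
    [5, 6, 9, 20], [5, 8, 10, 15], [5, 11, 12, 18], [5, 14, 19, 22], [6, 16, 19, 23],
    [7, 9, 13, 21], [7, 11, 17, 19], [7, 12, 15, 22], [8, 12, 19, 21], [9, 11, 15, 23],
    [9, 14, 17, 18], [10, 14, 21, 23], [11, 13, 16, 20]]

/-- The packing: the lists of `blockList`, read as sets. -/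
def blocks : Finset (Finset (Fin 24)) :=
  (blockList.map List.toFinset).toFinset

theorem mem_blocks {b : Finset (Fin 24)} : b ∈ blocks ↔ ∃ l ∈ blockList, l.toFinset = b := by
  simp [blocks]

theorem card_toFinset_of_mem {l : List (Fin 24)} (hl : l ∈ blockList) : l.toFinset.card = 4 := by
  have h : ∀ l ∈ blockList, l.Nodup ∧ l.length = 4 := by decide +kernel
  rw [List.toFinset_card_of_nodup (h l hl).1, (h l hl).2]

theorem inter_subsingleton :
    ∀ l₁ ∈ blockList, ∀ l₂ ∈ blockList, l₁ ≠ l₂ →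
      ∀ p ∈ l₁, p ∈ l₂ → ∀ q ∈ l₁, q ∈ l₂ → p = q := by
  decide +kernel

theorem isPacking_blocks : IsPacking blocks := by
  constructor
  · intro b hb
    obtain ⟨l, hl, rfl⟩ := mem_blocks.mp hb
    exact card_toFinset_of_mem hl
  · intro p q hpq b₁ h₁ b₂ h₂ hp₁ hq₁ hp₂ hq₂
    obtain ⟨l₁, hl₁, rfl⟩ := mem_blocks.mp h₁
    obtain ⟨l₂, hl₂, rfl⟩ := mem_blocks.mp h₂
    simp only [List.mem_toFinset] at hp₁ hq₁ hp₂ hq₂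
    by_contra hne
    exact hpq (inter_subsingleton l₁ hl₁ l₂ hl₂ (fun h => hne (by rw [h])) p hp₁ hp₂ q hq₁ hq₂)

theorem card_blocks : blocks.card = 42 := by
  have hnodup : (blockList.map List.toFinset).Nodup := by
    refine List.Nodup.map_on (fun l₁ hl₁ l₂ hl₂ h => ?_) (by decide +kernel)
    -- Distinct lists with the same four points would share more than one point.
    by_contra hne
    have hle : l₁.toFinset.card ≤ 1 := by
      refine Finset.card_le_one.mpr fun p hp q hq => ?_
      exact inter_subsingleton l₁ hl₁ l₂ hl₂ hne p (List.mem_toFinset.mp hp)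
        (List.mem_toFinset.mp (h ▸ hp)) q (List.mem_toFinset.mp hq) (List.mem_toFinset.mp (h ▸ hq))
    rw [card_toFinset_of_mem hl₁] at hle
    omega
  rw [blocks, List.toFinset_card_of_nodup hnodup, List.length_map]
  rfl

/-- `q` follows `p` on its hexagon, in coordinates: same quotient by 6, and consecutive
remainders modulo 6. -/
def IsNext (p q : Fin 24) : Prop :=
  p.val / 6 = q.val / 6 ∧ (p.val + 1) % 6 = q.val % 6

instance : DecidableRel IsNext := fun p q => by unfold IsNext; infer_instance

theorem uncovered_iff :
    ∀ p q : Fin 24, (p ≠ q ∧ ∀ l ∈ blockList, ¬ (p ∈ l ∧ q ∈ l)) ↔ IsNext p q ∨ IsNext q p := by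
  decide +kernel

theorem leaveAdj_iff (p q : Fin 24) : LeaveAdj blocks p q ↔ IsNext p q ∨ IsNext q p := by
  rw [← uncovered_iff]
  simp only [LeaveAdj, mem_blocks, forall_exists_index, and_imp, forall_apply_eq_imp_iff₂,
    List.mem_toFinset]

/-- Needed for the vertex sets of the cycles to be finite types, so that the claims about them
are decidable. -/
instance neZero_cycleLength (i : Fin [6, 6, 6, 6].length) : NeZero ([6, 6, 6, 6].get i) :=
  ⟨by revert i; decide⟩

/-- Vertex `k` of hexagon `i`, namely the point `6 * i + k`. -/
def hexagon (i : Fin [6, 6, 6, 6].length) (k : ZMod ([6, 6, 6, 6].get i)) : Fin 24 :=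
  Fin.ofNat 24 (6 * i.val + k.val)

theorem hexagon_bijective :
    Function.Bijective
      (fun x : Σ i : Fin [6, 6, 6, 6].length, ZMod ([6, 6, 6, 6].get i) => hexagon x.1 x.2) := by
  constructor
  · rintro ⟨i, k⟩ ⟨j, l⟩
    revert i k j l
    decide +kernel
  · rw [Function.Surjective]
    decide +kernel

theorem isNext_iff :
    ∀ p q : Fin 24, IsNext p q ↔ ∃ i k, p = hexagon i k ∧ q = hexagon i (k + 1) := by
  decide +kernel

/-- There is a 2-(24,4,1) packing with 42 blocks whose leave is a vertex-disjoint
union of cycles of lengths [6, 6, 6, 6], covering all 24 points. -/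
theorem exists_max_packing_with_leave_type :
    ∃ B : Finset (Finset (Fin 24)), IsPacking B ∧ B.card = 42 ∧
      LeaveIsCycleType B [6, 6, 6, 6] := by
  refine ⟨blocks, isPacking_blocks, card_blocks, hexagon, hexagon_bijective, fun p q => ?_⟩
  rw [leaveAdj_iff, isNext_iff, isNext_iff]
  simp only [exists_or]
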